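/- Under the stated assumptions, for every t ≥ Ψ(B̄₀) (with t ≥ 1) the BFGS iterates satisfy (f(x_t) − f(x_*))/(f(x₀) − f(x_*)) ≤ (1 − α(1−β)/(3(1+D₀)²))^t. -/

import Mathlib

/-!
Write `c = 1 + D₀`, `K = c ∇²f(x_*)`, `N = K⁻¹`, and for one step `g = ∇f(x_t)`, `p = -gᵀs_t > 0`.

**Hessian comparison.** Strong self-concordance, with the norm taken at `x_*`, yields
`(4 / M²) ω(M r / 2) ≤ f(x) - f(x_*)` for `r = ‖x - x_*‖_{x_*}` (`LineDerivs.omega_growth`). Hence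
`M r ≤ D₀` on the initial sublevel set, where `∇²f(x)` and `∇²f(x_*)` agree up to the factor `c`
(`LineDerivs.hess_compare`). All iterates, and the segments joining them to each other and to
`x_*`, lie in that convex set. By the mean value theorem this gives `yᵀNy ≤ sᵀy`
(`LineDerivs.cocoercive`) and `f(x_t) - f(x_*) ≤ c² gᵀNg` (`LineDerivs.gradient_dominated`), with
no need for averaged Hessians.

**Potential.** Let `P_t` be `Ψ` of `B_t` in the metric `N`, so that `P_0 = Ψ(B̄₀)`. The trace and
determinant formulas for the update give `gᵀNg · sᵀy · exp (P_{t+1} - P_t) ≤ p²`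
(`exp_psi_step`). The Armijo condition makes the decrease at least `α p`, and the Wolfe condition
gives `sᵀy ≥ (1 - β) p`; together the suboptimality contracts by the factor
`1 - κ exp (P_{t+1} - P_t)` with `κ = α (1 - β) / c²`.

**Product.** As `P_t ≥ 0` (`psi_nonneg`), the exponents sum to at least `-Ψ(B̄₀) ≥ -t`, and the
product of the factors is at most `(1 - κ / 3) ^ t` (`contraction_product`).
-/

open Matrix Real Finset

noncomputable section

/-- `ω(x) = x − log(1+x)`. -/
def omegaFn (x : ℝ) : ℝ := x - Real.log (1 + x)

/-- `Ψ(A) = Tr(A) − d − log det A`. -/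
def Psi (d : ℕ) (A : Matrix (Fin d) (Fin d) ℝ) : ℝ :=
  A.trace - (d : ℝ) - Real.log A.det

/-- Loewner order: `A ⪯ B` iff `B − A` is positive semidefinite. -/
def loewnerLE {d : ℕ} (A B : Matrix (Fin d) (Fin d) ℝ) : Prop := (B - A).PosSemidef

/-- The BFGS Hessian-approximation update
`B⁺ = B − (B s sᵀ B)/(sᵀ B s) + (y yᵀ)/(sᵀ y)`. -/
def bfgsUpdate {d : ℕ} (B : Matrix (Fin d) (Fin d) ℝ) (s y : Fin d → ℝ) :
    Matrix (Fin d) (Fin d) ℝ :=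
  B - (s ⬝ᵥ (B *ᵥ s))⁻¹ • vecMulVec (B *ᵥ s) (Bᵀ *ᵥ s) + (s ⬝ᵥ y)⁻¹ • vecMulVec y y

/-- `M`-strong self-concordance of a Hessian field:
`∇²f(x) − ∇²f(y) ⪯ M‖x−y‖_z ∇²f(y)` for all `x, y, z`. -/
def StronglySelfConcordant {d : ℕ} (hess : (Fin d → ℝ) → Matrix (Fin d) (Fin d) ℝ)
    (M : ℝ) : Prop :=
  ∀ x y z : Fin d → ℝ,
    loewnerLE (hess x - hess y)
      ((M * Real.sqrt ((x - y) ⬝ᵥ (hess z *ᵥ (x - y)))) • hess y)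


/-! ### Quadratic forms and the BFGS update -/

lemma psi_nonneg {d : ℕ} {A : Matrix (Fin d) (Fin d) ℝ} (hA : A.PosDef) : 0 ≤ Psi d A := by
  have hpos := hA.eigenvalues_pos
  have htr : A.trace = ∑ i, hA.1.eigenvalues i := by
    simpa using hA.1.trace_eq_sum_eigenvalues
  have hdet : A.det = ∏ i, hA.1.eigenvalues i := by
    simpa using hA.1.det_eq_prod_eigenvalues
  have hsum : ∑ i, Real.log (hA.1.eigenvalues i) ≤ ∑ i, (hA.1.eigenvalues i - 1) :=
    Finset.sum_le_sum fun i _ => Real.log_le_sub_one_of_pos (hpos i)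
  rw [Finset.sum_sub_distrib] at hsum
  simp only [Finset.sum_const, Finset.card_univ, Fintype.card_fin, nsmul_eq_mul, mul_one] at hsum
  unfold Psi
  rw [htr, hdet, Real.log_prod (fun i _ => (hpos i).ne')]
  linarith

lemma posDef_transpose_eq {d : ℕ} {A : Matrix (Fin d) (Fin d) ℝ} (hA : A.PosDef) : Aᵀ = A := by
  simpa [Matrix.IsHermitian] using hA.1

lemma dot_mulVec_comm {d : ℕ} {A : Matrix (Fin d) (Fin d) ℝ} (hA : A.PosDef) (u v : Fin d → ℝ) :
    u ⬝ᵥ (A *ᵥ v) = v ⬝ᵥ (A *ᵥ u) := by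
  rw [Matrix.dotProduct_mulVec, ← Matrix.mulVec_transpose, posDef_transpose_eq hA,
    dotProduct_comm]

lemma quad_pos {d : ℕ} {A : Matrix (Fin d) (Fin d) ℝ} (hA : A.PosDef) {v : Fin d → ℝ}
    (hv : v ≠ 0) : 0 < v ⬝ᵥ (A *ᵥ v) := by
  simpa using hA.dotProduct_mulVec_pos hv

lemma quad_nonneg {d : ℕ} {A : Matrix (Fin d) (Fin d) ℝ} (hA : A.PosDef) (v : Fin d → ℝ) :
    0 ≤ v ⬝ᵥ (A *ᵥ v) := by
  simpa using hA.posSemidef.dotProduct_mulVec_nonneg v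

/-- The arithmetic–geometric form of Cauchy–Schwarz for the inner product given by `A`. -/
lemma two_mul_dot_le {d : ℕ} {A : Matrix (Fin d) (Fin d) ℝ} (hA : A.PosDef)
    (u v : Fin d → ℝ) : 2 * (u ⬝ᵥ (A *ᵥ v)) ≤ u ⬝ᵥ (A *ᵥ u) + v ⬝ᵥ (A *ᵥ v) := by
  have h := quad_nonneg hA (u - v)
  simp only [Matrix.mulVec_sub, dotProduct_sub, sub_dotProduct] at h
  linarith [dot_mulVec_comm hA u v]

lemma mulVec_inv_cancel {d : ℕ} {A : Matrix (Fin d) (Fin d) ℝ} (hA : A.PosDef)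
    (v : Fin d → ℝ) : A *ᵥ (A⁻¹ *ᵥ v) = v := by
  rw [Matrix.mulVec_mulVec,
    Matrix.mul_nonsing_inv A ((Matrix.isUnit_iff_isUnit_det A).1 hA.isUnit), Matrix.one_mulVec]

lemma bfgsUpdate_quad {d : ℕ} {B : Matrix (Fin d) (Fin d) ℝ} (hB : B.PosDef)
    (s y v : Fin d → ℝ) :
    v ⬝ᵥ (bfgsUpdate B s y *ᵥ v) =
      v ⬝ᵥ (B *ᵥ v) - (s ⬝ᵥ (B *ᵥ s))⁻¹ * (v ⬝ᵥ (B *ᵥ s)) ^ 2 + (s ⬝ᵥ y)⁻¹ * (v ⬝ᵥ y) ^ 2 := by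
  unfold bfgsUpdate
  rw [posDef_transpose_eq hB]
  simp only [Matrix.add_mulVec, Matrix.sub_mulVec, Matrix.smul_mulVec, Matrix.vecMulVec_mulVec,
    dotProduct_add, dotProduct_sub, dotProduct_smul, smul_eq_mul, MulOpposite.smul_eq_mul_unop,
    MulOpposite.unop_op]
  rw [dotProduct_comm (B *ᵥ s) v, dotProduct_comm y v]
  ring

lemma bfgsUpdate_posDef {d : ℕ} {B : Matrix (Fin d) (Fin d) ℝ} (hB : B.PosDef)
    {s y : Fin d → ℝ} (hsy : 0 < s ⬝ᵥ y) : (bfgsUpdate B s y).PosDef := by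
  have hs : s ≠ 0 := by rintro rfl; simp at hsy
  have hsB := quad_pos hB hs
  have hT := posDef_transpose_eq hB
  refine Matrix.PosDef.of_dotProduct_mulVec_pos ?_ fun v hv => ?_
  · have : (bfgsUpdate B s y)ᵀ = bfgsUpdate B s y := by
      unfold bfgsUpdate
      rw [hT]
      simp [Matrix.transpose_vecMulVec, hT]
    simpa [Matrix.IsHermitian] using this
  · rw [star_trivial, bfgsUpdate_quad hB]
    set k := (v ⬝ᵥ (B *ᵥ s)) / (s ⬝ᵥ (B *ᵥ s)) with hk
    -- `w` is the component of `v` that is `B`-orthogonal to `s`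
    set w := v - k • s with hw
    have hvw : v = w + k • s := by simp [hw]
    have hq : w ⬝ᵥ (B *ᵥ w) =
        v ⬝ᵥ (B *ᵥ v) - (s ⬝ᵥ (B *ᵥ s))⁻¹ * (v ⬝ᵥ (B *ᵥ s)) ^ 2 := by
      rw [hw]
      simp only [Matrix.mulVec_sub, Matrix.mulVec_smul, dotProduct_sub, sub_dotProduct,
        dotProduct_smul, smul_dotProduct, smul_eq_mul]
      rw [dot_mulVec_comm hB s v, hk]
      field_simp
      ring
    rw [← hq]
    have h2 : 0 ≤ (s ⬝ᵥ y)⁻¹ * (v ⬝ᵥ y) ^ 2 := by positivity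
    by_cases h0 : w = 0
    · have hvk : v = k • s := by rw [hvw, h0, zero_add]
      have hk0 : k ≠ 0 := by
        intro h
        exact hv (by rw [hvk, h, zero_smul])
      have : v ⬝ᵥ y = k * (s ⬝ᵥ y) := by
        conv_lhs => rw [hvk]
        simp
      rw [this, h0]
      simp only [zero_dotProduct, zero_add]
      positivity
    · linarith [quad_pos hB h0]

lemma bfgsUpdate_trace {d : ℕ} {B : Matrix (Fin d) (Fin d) ℝ} (hB : B.PosDef)
    (N : Matrix (Fin d) (Fin d) ℝ) (s y : Fin d → ℝ) :
    (N * bfgsUpdate B s y).trace = (N * B).trace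
      - (s ⬝ᵥ (B *ᵥ s))⁻¹ * ((B *ᵥ s) ⬝ᵥ (N *ᵥ (B *ᵥ s))) + (s ⬝ᵥ y)⁻¹ * (y ⬝ᵥ (N *ᵥ y)) := by
  unfold bfgsUpdate
  rw [posDef_transpose_eq hB]
  simp only [Matrix.mul_add, Matrix.mul_sub, Matrix.mul_smul, Matrix.mul_vecMulVec,
    Matrix.trace_add, Matrix.trace_sub, Matrix.trace_smul, Matrix.trace_vecMulVec, smul_eq_mul]
  rw [dotProduct_comm (N *ᵥ (B *ᵥ s)), dotProduct_comm (N *ᵥ y)]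

/-- The update is `B (1 + U V)` with `U` of width two, so the Weinstein–Aronszajn identity reduces
its determinant to a `2 × 2` one. -/
lemma bfgsUpdate_det {d : ℕ} {B : Matrix (Fin d) (Fin d) ℝ} (hB : B.PosDef)
    {s y : Fin d → ℝ} (hsy : 0 < s ⬝ᵥ y) :
    (bfgsUpdate B s y).det = B.det * ((s ⬝ᵥ y) / (s ⬝ᵥ (B *ᵥ s))) := by
  have hs : s ≠ 0 := by rintro rfl; simp at hsy
  have hsB := quad_pos hB hs
  let u : Fin 2 → Fin d → ℝ := ![s, B⁻¹ *ᵥ y]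
  let v : Fin 2 → Fin d → ℝ := ![-(s ⬝ᵥ (B *ᵥ s))⁻¹ • (B *ᵥ s), (s ⬝ᵥ y)⁻¹ • y]
  let U : Matrix (Fin d) (Fin 2) ℝ := Matrix.of fun i j => u j i
  let V : Matrix (Fin 2) (Fin d) ℝ := Matrix.of fun j i => v j i
  have hUV : U * V = Matrix.vecMulVec s (v 0) + Matrix.vecMulVec (B⁻¹ *ᵥ y) (v 1) := by
    ext i j
    simp [Matrix.mul_apply, U, V, u, Matrix.vecMulVec_apply]
  have hfac : bfgsUpdate B s y = B * (1 + U * V) := by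
    unfold bfgsUpdate
    rw [hUV, posDef_transpose_eq hB, Matrix.mul_add, Matrix.mul_add, Matrix.mul_vecMulVec,
      Matrix.mul_vecMulVec, mulVec_inv_cancel hB]
    ext i j
    simp [v, Matrix.vecMulVec_apply]
    ring
  have hVU : ∀ i j, (V * U) i j = v i ⬝ᵥ u j := fun i j => rfl
  have e : (B *ᵥ s) ⬝ᵥ (B⁻¹ *ᵥ y) = s ⬝ᵥ y := by
    rw [dotProduct_comm, dot_mulVec_comm hB, mulVec_inv_cancel hB]
  have h00 : (V * U) 0 0 = -1 := by
    rw [hVU]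
    simp [v, u, dotProduct_comm (B *ᵥ s) s, hsB.ne']
  have h01 : (V * U) 0 1 = -((s ⬝ᵥ y) / (s ⬝ᵥ (B *ᵥ s))) := by
    rw [hVU]
    simp [v, u, e]
    ring
  have h10 : (V * U) 1 0 = 1 := by
    rw [hVU]
    simp [v, u, dotProduct_comm y s, hsy.ne']
  rw [hfac, Matrix.det_mul, Matrix.det_one_add_mul_comm, Matrix.det_fin_two]
  simp only [Matrix.add_apply, h00, h01, h10, Matrix.one_apply_eq]
  simp

/-- One BFGS step changes `Ψ`, measured in the metric `N`, by at most `log (p² / (gᵀNg · sᵀy))`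
once `yᵀNy ≤ sᵀy`; here `B s = -η g` and `p = -gᵀs`. -/
lemma exp_psi_step {d : ℕ} {B R N : Matrix (Fin d) (Fin d) ℝ} (hB : B.PosDef)
    {c : ℝ} (hN : N = c⁻¹ • (R * R)) (hNpd : N.PosDef)
    {s y g : Fin d → ℝ} {η p : ℝ} (hη : 0 < η) (hBs : B *ᵥ s = -(η • g))
    (hp : p = -(g ⬝ᵥ s)) (hp0 : 0 < p) (hsy : 0 < s ⬝ᵥ y)
    (hyN : y ⬝ᵥ (N *ᵥ y) ≤ s ⬝ᵥ y) :
    (g ⬝ᵥ (N *ᵥ g)) * (s ⬝ᵥ y) *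
      Real.exp (Psi d (c⁻¹ • (R * bfgsUpdate B s y * R)) - Psi d (c⁻¹ • (R * B * R))) ≤ p ^ 2 := by
  have hB' := bfgsUpdate_posDef hB hsy
  have htr : ∀ X : Matrix (Fin d) (Fin d) ℝ, (c⁻¹ • (R * X * R)).trace = (N * X).trace := by
    intro X
    rw [hN, Matrix.smul_mul, Matrix.trace_smul, Matrix.trace_smul, Matrix.trace_mul_comm,
      Matrix.mul_assoc]
  have hdet : ∀ X : Matrix (Fin d) (Fin d) ℝ, (c⁻¹ • (R * X * R)).det = N.det * X.det := by
    intro X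
    rw [hN, Matrix.det_smul, Matrix.det_smul, Matrix.det_mul, Matrix.det_mul, Matrix.det_mul]
    ring
  have hsBs : s ⬝ᵥ (B *ᵥ s) = η * p := by
    rw [hBs, hp]; simp [dotProduct_comm s g]
  have hBNB : (B *ᵥ s) ⬝ᵥ (N *ᵥ (B *ᵥ s)) = η ^ 2 * (g ⬝ᵥ (N *ᵥ g)) := by
    rw [hBs]; simp [Matrix.mulVec_neg, Matrix.mulVec_smul]; ring
  have hg : g ≠ 0 := by rintro rfl; simp at hp; linarith
  have hG := quad_pos hNpd hg
  set G := g ⬝ᵥ (N *ᵥ g)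
  have hNd := hNpd.det_pos
  have hBd := hB.det_pos
  have hr : 0 < (s ⬝ᵥ y) / (η * p) := by positivity
  have hdiff : Psi d (c⁻¹ • (R * bfgsUpdate B s y * R)) - Psi d (c⁻¹ • (R * B * R)) =
      -(η * G / p) + (s ⬝ᵥ y)⁻¹ * (y ⬝ᵥ (N *ᵥ y)) - Real.log ((s ⬝ᵥ y) / (η * p)) := by
    unfold Psi
    rw [htr, htr, hdet, hdet, bfgsUpdate_trace hB, bfgsUpdate_det hB hsy, hsBs, hBNB,
      ← mul_assoc N.det, Real.log_mul (by positivity) hr.ne']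
    field_simp
    ring
  have h1 : (s ⬝ᵥ y)⁻¹ * (y ⬝ᵥ (N *ᵥ y)) ≤ 1 := by
    rw [inv_mul_le_iff₀ hsy]; simpa using hyN
  have h2 : Real.log (η * G / p) ≤ η * G / p - 1 := Real.log_le_sub_one_of_pos (by positivity)
  have h3 : Psi d (c⁻¹ • (R * bfgsUpdate B s y * R)) - Psi d (c⁻¹ • (R * B * R)) ≤
      Real.log (p ^ 2 / (G * (s ⬝ᵥ y))) := by
    have : Real.log (p ^ 2 / (G * (s ⬝ᵥ y))) =
        - Real.log (η * G / p) - Real.log ((s ⬝ᵥ y) / (η * p)) := by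
      rw [← Real.log_inv, ← Real.log_div (by positivity) hr.ne']
      congr 1
      field_simp
    rw [hdiff, this]
    linarith
  have h4 := Real.exp_le_exp.2 h3
  rw [Real.exp_log (by positivity), le_div_iff₀ (by positivity)] at h4
  linarith

/-! ### Convexity and self-concordance along lines -/

/-- `grad` and `hess` are the first and second derivatives of `f` along every line, and `hess` is
positive definite. This is all that the convexity arguments use. -/
structure LineDerivs {d : ℕ} (f : (Fin d → ℝ) → ℝ) (grad : (Fin d → ℝ) → (Fin d → ℝ))
    (hess : (Fin d → ℝ) → Matrix (Fin d) (Fin d) ℝ) : Prop where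
  first : ∀ (a u : Fin d → ℝ) (τ : ℝ),
    HasDerivAt (fun τ : ℝ => f (a + τ • u)) (grad (a + τ • u) ⬝ᵥ u) τ
  second : ∀ (a u v : Fin d → ℝ) (τ : ℝ),
    HasDerivAt (fun τ : ℝ => grad (a + τ • u) ⬝ᵥ v) (v ⬝ᵥ (hess (a + τ • u) *ᵥ u)) τ
  posDef : ∀ x, (hess x).PosDef

lemma lineDerivs_of_contDiff {d : ℕ} {f : (Fin d → ℝ) → ℝ} {grad : (Fin d → ℝ) → (Fin d → ℝ)}
    {hess : (Fin d → ℝ) → Matrix (Fin d) (Fin d) ℝ} (hf : ContDiff ℝ 2 f)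
    (hgrad : ∀ x v, fderiv ℝ f x v = grad x ⬝ᵥ v)
    (hhess : ∀ x v, fderiv ℝ grad x v = hess x *ᵥ v)
    (hpd : ∀ x, (hess x).PosDef) : LineDerivs f grad hess := by
  have hline : ∀ (a u : Fin d → ℝ) (τ : ℝ), HasDerivAt (fun τ : ℝ => a + τ • u) u τ := by
    intro a u τ
    simpa using ((hasDerivAt_id τ).smul_const u).const_add a
  have hgd : Differentiable ℝ grad := by
    have hfd : Differentiable ℝ (fderiv ℝ f) :=
      (hf.fderiv_right (m := 1) (by norm_num)).differentiable (by norm_num)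
    rw [differentiable_pi]
    intro i
    have : (fun x => grad x i) = fun x => fderiv ℝ f x (Pi.single i 1) := by
      funext x
      rw [hgrad]
      simp
    rw [this]
    exact fun x => (hfd x).clm_apply (differentiableAt_const _)
  refine ⟨fun a u τ => ?_, fun a u v τ => ?_, hpd⟩
  · have h := ((hf.differentiable (by norm_num)) (a + τ • u)).hasFDerivAt
    have h2 := h.comp_hasDerivAt τ (hline a u τ)
    rw [hgrad] at h2
    exact h2
  · have h := (hgd (a + τ • u)).hasFDerivAt
    have h2 := h.comp_hasDerivAt τ (hline a u τ)
    rw [hhess] at h2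
    rw [dotProduct_comm]
    have h3 := hasDerivAt_pi.1 h2
    exact HasDerivAt.fun_sum fun i _ => (h3 i).mul_const (v i)

/-- A function on `[0,1]` with nonnegative second derivative lies above its tangent at `0`. -/
lemma tangent_le_of_second_deriv_nonneg {h h' h'' : ℝ → ℝ}
    (h1 : ∀ τ ∈ Set.Icc (0:ℝ) 1, HasDerivAt h (h' τ) τ)
    (h2 : ∀ τ ∈ Set.Icc (0:ℝ) 1, HasDerivAt h' (h'' τ) τ)
    (hn : ∀ τ ∈ Set.Icc (0:ℝ) 1, 0 ≤ h'' τ) : h 0 + h' 0 ≤ h 1 := by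
  obtain ⟨ξ, hξ, e⟩ := exists_hasDerivAt_eq_slope h h' one_pos
    (fun τ hτ => (h1 τ hτ).continuousAt.continuousWithinAt)
    (fun τ hτ => h1 τ (Set.Ioo_subset_Icc_self hτ))
  have hsub : Set.Icc 0 ξ ⊆ Set.Icc (0:ℝ) 1 := Set.Icc_subset_Icc_right hξ.2.le
  obtain ⟨ζ, hζ, e2⟩ := exists_hasDerivAt_eq_slope h' h'' hξ.1
    (fun τ hτ => (h2 τ (hsub hτ)).continuousAt.continuousWithinAt)
    (fun τ hτ => h2 τ (hsub (Set.Ioo_subset_Icc_self hτ)))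
  have h3 := hn ζ (hsub (Set.Ioo_subset_Icc_self hζ))
  rw [e2, sub_zero, le_div_iff₀ hξ.1] at h3
  simp at e
  linarith

lemma exists_slope_01 {h h' : ℝ → ℝ} (h1 : ∀ τ, HasDerivAt h (h' τ) τ) :
    ∃ ξ ∈ Set.Ioo (0:ℝ) 1, h' ξ = h 1 - h 0 := by
  obtain ⟨ξ, hξ, e⟩ := exists_hasDerivAt_eq_slope h h' one_pos
    (fun τ _ => (h1 τ).continuousAt.continuousWithinAt) (fun τ _ => h1 τ)
  exact ⟨ξ, hξ, by simpa using e⟩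

section Convex

variable {d : ℕ} {f : (Fin d → ℝ) → ℝ} {grad : (Fin d → ℝ) → (Fin d → ℝ)}
  {hess : (Fin d → ℝ) → Matrix (Fin d) (Fin d) ℝ}

lemma LineDerivs.tangent_le (L : LineDerivs f grad hess) (a b : Fin d → ℝ) :
    f a + grad a ⬝ᵥ (b - a) ≤ f b := by
  have := tangent_le_of_second_deriv_nonneg (fun τ _ => L.first a (b - a) τ)
    (fun τ _ => L.second a (b - a) (b - a) τ) (fun τ _ => quad_nonneg (L.posDef _) _)
  simpa using this

lemma LineDerivs.segment_le (L : LineDerivs f grad hess) {a u : Fin d → ℝ} {m : ℝ}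
    (ha : f a ≤ m) (hb : f (a + u) ≤ m) {τ : ℝ} (hτ : τ ∈ Set.Icc (0:ℝ) 1) :
    f (a + τ • u) ≤ m := by
  have h1 := L.tangent_le (a + τ • u) a
  have h2 := L.tangent_le (a + τ • u) (a + u)
  have e1 : a - (a + τ • u) = (-τ) • u := by module
  have e2 : (a + u) - (a + τ • u) = (1 - τ) • u := by module
  rw [e1, dotProduct_smul, smul_eq_mul] at h1
  rw [e2, dotProduct_smul, smul_eq_mul] at h2
  have h3 := mul_le_mul_of_nonneg_left (h1.trans ha) (sub_nonneg.2 hτ.2)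
  have h4 := mul_le_mul_of_nonneg_left (h2.trans hb) hτ.1
  nlinarith

lemma LineDerivs.grad_eq_zero (L : LineDerivs f grad hess) {a : Fin d → ℝ}
    (hmin : ∀ y, f a ≤ f y) : grad a = 0 := by
  have h := L.first a (grad a) 0
  have hm : IsLocalMin (fun τ : ℝ => f (a + τ • grad a)) 0 :=
    Filter.Eventually.of_forall fun τ => by simpa using hmin _
  have := hm.hasDerivAt_eq_zero h
  simpa using this

lemma omega_lt_omega {a b : ℝ} (ha : 0 ≤ a) (hab : a < b) : omegaFn a < omegaFn b := by
  unfold omegaFn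
  have h1 : Real.log ((1 + b) / (1 + a)) < (1 + b) / (1 + a) - 1 :=
    Real.log_lt_sub_one_of_pos (by have : 0 < b := by linarith
                                   positivity)
      (by rw [Ne, div_eq_one_iff_eq (by linarith)]; linarith)
  rw [Real.log_div (by linarith) (by linarith)] at h1
  have h2 : (1 + b) / (1 + a) - 1 ≤ b - a := by
    rw [div_sub_one (by linarith), div_le_iff₀ (by linarith)]
    nlinarith
  linarith

/-- Growth of a strongly self-concordant function away from its minimizer. Taking the norm at the
minimizer in the definition gives `φ''(τ) ≥ r² / (1 + M r τ)` along the segment, which dominates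
the second derivative `r² / (1 + M r τ / 2)²` of `(4 / M²) ω(M r τ / 2)`. -/
lemma LineDerivs.omega_growth (L : LineDerivs f grad hess) {M : ℝ} (hM : 0 < M)
    (hssc : StronglySelfConcordant hess M) {a : Fin d → ℝ} (hmin : ∀ y, f a ≤ f y)
    (u : Fin d → ℝ) :
    omegaFn (M * √(u ⬝ᵥ (hess a *ᵥ u)) / 2) ≤ M ^ 2 * (f (a + u) - f a) / 4 := by
  set r := √(u ⬝ᵥ (hess a *ᵥ u)) with hr
  have hr0 : 0 ≤ r := Real.sqrt_nonneg _
  have hr2 : r ^ 2 = u ⬝ᵥ (hess a *ᵥ u) := Real.sq_sqrt (quad_nonneg (L.posDef a) u)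
  set k := M * r / 2 with hk
  have hk0 : 0 ≤ k := by positivity
  have hpos : ∀ τ ∈ Set.Icc (0:ℝ) 1, 0 < 1 + k * τ := fun τ hτ => by
    have := hτ.1
    positivity
  have hlin : ∀ τ : ℝ, HasDerivAt (fun τ : ℝ => 1 + k * τ) k τ := fun τ => by
    simpa using ((hasDerivAt_id τ).const_mul k).const_add 1
  have key := tangent_le_of_second_deriv_nonneg
    (h := fun τ => M ^ 2 / 4 * f (a + τ • u) - (k * τ - Real.log (1 + k * τ)))
    (h' := fun τ => M ^ 2 / 4 * (grad (a + τ • u) ⬝ᵥ u) - (k - k / (1 + k * τ)))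
    (h'' := fun τ => M ^ 2 / 4 * (u ⬝ᵥ (hess (a + τ • u) *ᵥ u)) - (k / (1 + k * τ)) ^ 2)
    (fun τ hτ => by
      refine ((L.first a u τ).const_mul _).sub (HasDerivAt.sub ?_ ?_)
      · simpa using (hasDerivAt_id τ).const_mul k
      · exact (hlin τ).log (hpos τ hτ).ne')
    (fun τ hτ => by
      refine ((L.second a u u τ).const_mul _).sub ?_
      have := ((hasDerivAt_const τ k).div (hlin τ) (hpos τ hτ).ne').const_sub k
      have e : (k / (1 + k * τ)) ^ 2 = -((0 * (1 + k * τ) - k * k) / (1 + k * τ) ^ 2) := by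
        rw [div_pow]; ring
      rw [e]
      exact this)
    (fun τ hτ => by
      have h := (hssc a (a + τ • u) a).dotProduct_mulVec_nonneg u
      have e1 : a - (a + τ • u) = (-τ) • u := by module
      have e2 : √((a - (a + τ • u)) ⬝ᵥ (hess a *ᵥ (a - (a + τ • u)))) = τ * r := by
        rw [e1]
        simp only [Matrix.mulVec_smul, smul_dotProduct, dotProduct_smul, smul_eq_mul]
        rw [← hr2, show -τ * (-τ * r ^ 2) = (τ * r) ^ 2 by ring,
          Real.sqrt_sq (mul_nonneg hτ.1 hr0)]
      rw [e2, star_trivial] at h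
      simp only [Matrix.sub_mulVec, Matrix.smul_mulVec, dotProduct_sub, dotProduct_smul,
        smul_eq_mul] at h
      rw [← hr2] at h
      set q := u ⬝ᵥ (hess (a + τ • u) *ᵥ u)
      have hq : 0 ≤ q := quad_nonneg (L.posDef _) u
      have h1 : r ^ 2 ≤ (1 + k * τ) ^ 2 * q := by
        have : M * (τ * r) = 2 * (k * τ) := by rw [hk]; ring
        rw [this] at h
        nlinarith [mul_nonneg (sq_nonneg (k * τ)) hq]
      have h2 : (k / (1 + k * τ)) ^ 2 ≤ M ^ 2 / 4 * q := by
        rw [div_pow, div_le_iff₀ (pow_pos (hpos τ hτ) 2)]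
        calc k ^ 2 = M ^ 2 / 4 * r ^ 2 := by rw [hk]; ring
          _ ≤ M ^ 2 / 4 * ((1 + k * τ) ^ 2 * q) := by gcongr
          _ = _ := by ring
      linarith)
  simp only [L.grad_eq_zero hmin, zero_smul, one_smul, add_zero, mul_zero, mul_one, zero_dotProduct,
    Real.log_one, sub_zero, div_one, sub_self] at key
  unfold omegaFn
  linarith

/-- On a sublevel set `{f ≤ m}` with `ω(D/2) = M² (m - f a) / 4`, the Hessian is comparable to the
Hessian at the minimizer within the factor `1 + D`, in both directions. -/
lemma LineDerivs.hess_compare (L : LineDerivs f grad hess) {M : ℝ} (hM : 0 < M)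
    (hssc : StronglySelfConcordant hess M) {a : Fin d → ℝ} (hmin : ∀ y, f a ≤ f y)
    {m D : ℝ} (hD0 : 0 ≤ D) (hD : omegaFn (D / 2) = M ^ 2 * (m - f a) / 4)
    {z : Fin d → ℝ} (hz : f z ≤ m) (v : Fin d → ℝ) :
    v ⬝ᵥ (hess z *ᵥ v) ≤ (1 + D) * (v ⬝ᵥ (hess a *ᵥ v)) ∧
      v ⬝ᵥ (hess a *ᵥ v) ≤ (1 + D) * (v ⬝ᵥ (hess z *ᵥ v)) := by
  set r := √((z - a) ⬝ᵥ (hess a *ᵥ (z - a))) with hr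
  have hMr : M * r ≤ D := by
    by_contra! hlt
    have h1 := L.omega_growth hM hssc hmin (z - a)
    rw [add_sub_cancel, ← hr] at h1
    have h2 := omega_lt_omega (a := D / 2) (b := M * r / 2) (by linarith) (by linarith)
    have h3 : M ^ 2 * (f z - f a) ≤ M ^ 2 * (m - f a) := by gcongr
    linarith
  have h1 := (hssc z a a).dotProduct_mulVec_nonneg v
  have h2 := (hssc a z a).dotProduct_mulVec_nonneg v
  have e : (a - z) ⬝ᵥ (hess a *ᵥ (a - z)) = (z - a) ⬝ᵥ (hess a *ᵥ (z - a)) := by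
    rw [← neg_sub z a, Matrix.mulVec_neg, neg_dotProduct_neg]
  rw [e] at h2
  rw [← hr, star_trivial] at h1 h2
  simp only [Matrix.sub_mulVec, Matrix.smul_mulVec, dotProduct_sub, dotProduct_smul,
    smul_eq_mul] at h1 h2
  have q1 := mul_le_mul_of_nonneg_right hMr (quad_nonneg (L.posDef a) v)
  have q2 := mul_le_mul_of_nonneg_right hMr (quad_nonneg (L.posDef z) v)
  constructor <;> linarith

/-- Co-coercivity: if the Hessian is bounded by `K` on a segment, the gradient difference `y` along
it satisfies `yᵀK⁻¹y ≤ sᵀy`. The mean value theorem is applied to the gradient tested against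
`K⁻¹y - s/2`. -/
lemma LineDerivs.cocoercive (L : LineDerivs f grad hess) {K : Matrix (Fin d) (Fin d) ℝ}
    (hK : K.PosDef) {a s : Fin d → ℝ}
    (hb : ∀ τ ∈ Set.Icc (0:ℝ) 1, ∀ v, v ⬝ᵥ (hess (a + τ • s) *ᵥ v) ≤ v ⬝ᵥ (K *ᵥ v)) :
    (grad (a + s) - grad a) ⬝ᵥ (K⁻¹ *ᵥ (grad (a + s) - grad a)) ≤
      s ⬝ᵥ (grad (a + s) - grad a) := by
  set y := grad (a + s) - grad a with hy
  set w := K⁻¹ *ᵥ y with hw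
  have hKw : K *ᵥ w = y := mulVec_inv_cancel hK y
  obtain ⟨ξ, hξ, e⟩ := exists_slope_01 (L.second a s (w - (1/2 : ℝ) • s))
  simp only [one_smul, zero_smul, add_zero] at e
  rw [← sub_dotProduct, ← hy, sub_dotProduct, dotProduct_sub, smul_dotProduct,
    dotProduct_smul, smul_eq_mul, smul_eq_mul] at e
  have h1 := two_mul_dot_le (L.posDef (a + ξ • s)) w s
  have h2 := hb ξ (Set.Ioo_subset_Icc_self hξ) w
  rw [hKw, dotProduct_comm w y] at h2
  rw [dotProduct_comm s y]
  linarith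

/-- Gradient domination: if `K` is at most `κ` times the Hessian between the minimizer `a` and
`a + e`, the suboptimality at `a + e` is at most `κ gᵀK⁻¹g`. -/
lemma LineDerivs.gradient_dominated (L : LineDerivs f grad hess) {K : Matrix (Fin d) (Fin d) ℝ}
    (hK : K.PosDef) {a e : Fin d → ℝ} (hmin : ∀ y, f a ≤ f y) {κ : ℝ} (hκ : 0 < κ)
    (hb : ∀ τ ∈ Set.Icc (0:ℝ) 1, ∀ v, v ⬝ᵥ (K *ᵥ v) ≤ κ * (v ⬝ᵥ (hess (a + τ • e) *ᵥ v))) :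
    f (a + e) - f a ≤ κ * (grad (a + e) ⬝ᵥ (K⁻¹ *ᵥ grad (a + e))) := by
  set g := grad (a + e) with hg
  set w := K⁻¹ *ᵥ g with hw
  have hKw : K *ᵥ w = g := mulVec_inv_cancel hK g
  have h1 := L.tangent_le (a + e) a
  have e1 : a - (a + e) = -e := by module
  rw [e1, dotProduct_neg, ← hg] at h1
  obtain ⟨ξ, hξ, h2⟩ := exists_slope_01 (L.second a e e)
  simp only [one_smul, zero_smul, add_zero, L.grad_eq_zero hmin, zero_dotProduct, sub_zero] at h2
  have h3 := hb ξ (Set.Ioo_subset_Icc_self hξ) e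
  rw [h2, ← hg] at h3
  have h4 := two_mul_dot_le hK e (κ • w)
  simp only [Matrix.mulVec_smul, dotProduct_smul, smul_dotProduct, smul_eq_mul, hKw] at h4
  rw [dotProduct_comm e g, dotProduct_comm w g] at h4
  have h5 : κ * (g ⬝ᵥ e) ≤ κ * (κ * (g ⬝ᵥ w)) := by linarith
  have h6 := le_of_mul_le_mul_left h5 hκ
  linarith

end Convex

/-! ### Multiplying the one-step contractions -/

/-- If the contraction factors are `1 - 3 z exp (δ i)` with exponents summing to at least `-t`,
the product of the first `t` factors is at most `(1 - z) ^ t`. Since `1 / e ≥ 1 / 3`, one has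
`3 exp δ ≥ exp (δ + 1) ≥ 1 + (δ + 1)`, so each factor is at most
`(1 - z) exp (-w (δ + 1))` with `w = z / (1 - z)`; these bounds multiply exactly. -/
lemma contraction_product {C P : ℕ → ℝ} {z : ℝ} (hz0 : 0 ≤ z) (hz1 : z < 1)
    (hC0 : 0 ≤ C 0) (t : ℕ) (hC : ∀ i < t, 0 ≤ C i)
    (hstep : ∀ i < t, C (i + 1) ≤ C i * (1 - 3 * z * Real.exp (P (i + 1) - P i)))
    (hPt : 0 ≤ P t) (hP0 : P 0 ≤ t) : C t ≤ C 0 * (1 - z) ^ t := by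
  set w := z / (1 - z) with hw
  have h1z : 0 < 1 - z := by linarith
  have hw0 : 0 ≤ w := div_nonneg hz0 h1z.le
  have hfac : ∀ δ : ℝ, 1 - 3 * z * Real.exp δ ≤ (1 - z) * Real.exp (-(w * (δ + 1))) := by
    intro δ
    have h1 : Real.exp δ = Real.exp (δ + 1) * Real.exp (-1) := by
      rw [← Real.exp_add]; congr 1; ring
    have h2 : (1:ℝ) / 3 ≤ Real.exp (-1) := by
      rw [Real.exp_neg, one_div]
      exact inv_anti₀ (Real.exp_pos 1) (by linarith [Real.exp_one_lt_d9])
    have h3 : δ + 1 + 1 ≤ Real.exp (δ + 1) := Real.add_one_le_exp _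
    have h4 : Real.exp (δ + 1) * (1 / 3) ≤ Real.exp δ := by
      rw [h1]; gcongr
    have h5 : z * (δ + 1 + 1) ≤ z * (3 * Real.exp δ) := by
      apply mul_le_mul_of_nonneg_left _ hz0
      linarith
    have h6 : -(w * (δ + 1)) + 1 ≤ Real.exp (-(w * (δ + 1))) := Real.add_one_le_exp _
    have h7 : (1 - z) * (-(w * (δ + 1)) + 1) = 1 - z * (δ + 1 + 1) := by
      rw [hw]; field_simp; ring
    have h8 := mul_le_mul_of_nonneg_left h6 h1z.le
    linarith
  have hind : ∀ i ≤ t, C i ≤ C 0 * ((1 - z) ^ i * Real.exp (-(w * (P i - P 0 + i)))) := by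
    intro i
    induction i with
    | zero => intro _; simp
    | succ i ih =>
      intro hi
      have hlt : i < t := hi
      calc C (i + 1) ≤ C i * (1 - 3 * z * Real.exp (P (i + 1) - P i)) := hstep i hlt
        _ ≤ C i * ((1 - z) * Real.exp (-(w * (P (i + 1) - P i + 1)))) :=
          mul_le_mul_of_nonneg_left (hfac _) (hC i hlt)
        _ ≤ C 0 * ((1 - z) ^ i * Real.exp (-(w * (P i - P 0 + i)))) *
            ((1 - z) * Real.exp (-(w * (P (i + 1) - P i + 1)))) := by
          apply mul_le_mul_of_nonneg_right (ih hlt.le)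
          positivity
        _ = C 0 * ((1 - z) ^ (i + 1) * (Real.exp (-(w * (P i - P 0 + i))) *
            Real.exp (-(w * (P (i + 1) - P i + 1))))) := by ring
        _ = _ := by
          rw [← Real.exp_add]
          push_cast
          congr 3
          ring
  refine (hind t le_rfl).trans (mul_le_mul_of_nonneg_left ?_ hC0)
  have : Real.exp (-(w * (P t - P 0 + t))) ≤ 1 := by
    rw [Real.exp_le_one_iff, neg_nonpos]
    exact mul_nonneg hw0 (by linarith)
  exact mul_le_of_le_one_right (by positivity) this

/-! ### Global convergence -/

/-- Global linear convergence of BFGS (Theorem 1, simplified rate for `t ≥ Ψ(B̄₀)`). -/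
theorem bfgs_global_linear_rate_simplified {d : ℕ}
    (f : (Fin d → ℝ) → ℝ)
    (grad : (Fin d → ℝ) → (Fin d → ℝ))
    (hess : (Fin d → ℝ) → Matrix (Fin d) (Fin d) ℝ)
    (hf : ContDiff ℝ 2 f)
    (hgrad : ∀ x v, fderiv ℝ f x v = grad x ⬝ᵥ v)
    (hhess : ∀ x v, fderiv ℝ grad x v = hess x *ᵥ v)
    (hpd : ∀ x, (hess x).PosDef)
    (M : ℝ) (hM : 0 < M)
    (hssc : StronglySelfConcordant hess M)
    (xstar : Fin d → ℝ) (hmin : ∀ y, f xstar ≤ f y)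
    (α β : ℝ) (hα0 : 0 < α) (hα : α < 1/2) (hαβ : α < β) (hβ : β < 1)
    (x : ℕ → Fin d → ℝ) (B : ℕ → Matrix (Fin d) (Fin d) ℝ) (η : ℕ → ℝ)
    (hB0symm : (B 0).IsSymm) (hB0pd : (B 0).PosDef)
    (hx0 : f xstar < f (x 0))
    (hη : ∀ t, 0 < η t)
    (hxupd : ∀ t, x (t+1) = x t + η t • (-((B t)⁻¹ *ᵥ grad (x t))))
    (hBupd : ∀ t, B (t+1) = bfgsUpdate (B t) (x (t+1) - x t) (grad (x (t+1)) - grad (x t)))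
    (hAW1 : ∀ t, f (x (t+1)) ≤
      f (x t) + α * η t * (grad (x t) ⬝ᵥ (-((B t)⁻¹ *ᵥ grad (x t)))))
    (hAW2 : ∀ t, grad (x (t+1)) ⬝ᵥ (-((B t)⁻¹ *ᵥ grad (x t))) ≥
      β * (grad (x t) ⬝ᵥ (-((B t)⁻¹ *ᵥ grad (x t)))))
    (C : ℕ → ℝ) (hC : ∀ t, C t = f (x t) - f xstar)
    (D : ℕ → ℝ) (hD : ∀ t, 0 ≤ D t ∧ omegaFn (D t / 2) = M ^ 2 * C t / 4)
    (S : Matrix (Fin d) (Fin d) ℝ) (hSpd : S.PosDef) (hSsq : S * S = hess xstar)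
    (Bbar : Matrix (Fin d) (Fin d) ℝ)
    (hBbar : Bbar = (1 + D 0)⁻¹ • (S⁻¹ * B 0 * S⁻¹))
    (t : ℕ) (ht1 : 1 ≤ t) (ht : Psi d Bbar ≤ (t : ℝ)) :
    (f (x t) - f xstar) / (f (x 0) - f xstar) ≤
      (1 - α * (1 - β) / (3 * (1 + D 0) ^ 2)) ^ t := by
  have L := lineDerivs_of_contDiff hf hgrad hhess hpd
  set c := 1 + D 0 with hc
  have hc1 : 1 ≤ c := by linarith [(hD 0).1]
  have hc0 : 0 < c := by linarith
  have hK : (c • hess xstar).PosDef := (hpd xstar).smul hc0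
  set N := (c • hess xstar)⁻¹ with hN
  have hNpd : N.PosDef := hK.inv
  have hNR : N = c⁻¹ • (S⁻¹ * S⁻¹) := by
    rw [hN, ← Matrix.mul_inv_rev, hSsq]
    apply Matrix.inv_eq_left_inv
    rw [Matrix.smul_mul, Matrix.mul_smul, smul_smul, inv_mul_cancel₀ hc0.ne', one_smul,
      Matrix.nonsing_inv_mul _ ((Matrix.isUnit_iff_isUnit_det _).1 (hpd xstar).isUnit)]
  -- Facts about one step taken from a positive definite `B i` at a non-stationary point.
  have hstep : ∀ i, (B i).PosDef → grad (x i) ≠ 0 →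
      B i *ᵥ (x (i+1) - x i) = -(η i • grad (x i)) ∧
      0 < -(grad (x i) ⬝ᵥ (x (i+1) - x i)) ∧
      α * -(grad (x i) ⬝ᵥ (x (i+1) - x i)) ≤ f (x i) - f (x (i+1)) ∧
      (1 - β) * -(grad (x i) ⬝ᵥ (x (i+1) - x i)) ≤
        (x (i+1) - x i) ⬝ᵥ (grad (x (i+1)) - grad (x i)) := by
    intro i hB hg
    have hs : x (i+1) - x i = η i • (-((B i)⁻¹ *ᵥ grad (x i))) := by
      rw [hxupd i]; module
    have hq := quad_pos hB.inv hg
    have hw := hAW2 i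
    have ha := hAW1 i
    set dir := -((B i)⁻¹ *ᵥ grad (x i)) with hdir
    have hgd : grad (x i) ⬝ᵥ dir = -(grad (x i) ⬝ᵥ ((B i)⁻¹ *ᵥ grad (x i))) := by
      rw [hdir, dotProduct_neg]
    have hmul := mul_le_mul_of_nonneg_left hw (hη i).le
    refine ⟨?_, ?_, ?_, ?_⟩
    · rw [hs, hdir, Matrix.mulVec_smul, Matrix.mulVec_neg, mulVec_inv_cancel hB, smul_neg]
    · rw [hs, dotProduct_smul, smul_eq_mul, hgd]
      have := mul_pos (hη i) hq
      linarith
    · rw [hs, dotProduct_smul, smul_eq_mul]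
      linarith
    · rw [hs, smul_dotProduct, dotProduct_smul, dotProduct_sub, smul_eq_mul, smul_eq_mul,
        dotProduct_comm dir, dotProduct_comm dir]
      linarith
  have hBpd : ∀ i, (B i).PosDef := by
    intro i
    induction i with
    | zero => exact hB0pd
    | succ i ih =>
      by_cases hg : grad (x i) = 0
      · -- At a stationary point `s = y = 0`, and with `0⁻¹ = 0` the update leaves `B i` unchanged.
        have hs : x (i+1) - x i = 0 := by rw [hxupd i, hg]; simp
        have hs' : x (i+1) = x i := sub_eq_zero.1 hs
        rw [hBupd i, hs']
        simpa [bfgsUpdate] using ih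
      · obtain ⟨_, h2, _, h4⟩ := hstep i ih hg
        rw [hBupd i]
        exact bfgsUpdate_posDef ih (lt_of_lt_of_le (mul_pos (by linarith) h2) h4)
  have hdec : ∀ i, f (x (i+1)) ≤ f (x i) := by
    intro i
    by_cases hg : grad (x i) = 0
    · rw [hxupd i, hg]; simp
    · obtain ⟨_, h2, h3, _⟩ := hstep i (hBpd i) hg
      linarith [mul_pos hα0 h2]
  have hanti : Antitone fun i => f (x i) := antitone_nat_of_succ_le hdec
  have hle0 : ∀ i, f (x i) ≤ f (x 0) := fun i => hanti (Nat.zero_le i)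
  have hDω : omegaFn (D 0 / 2) = M ^ 2 * (f (x 0) - f xstar) / 4 := by
    rw [(hD 0).2, hC 0]
  have hcmp : ∀ z, f z ≤ f (x 0) → ∀ v, v ⬝ᵥ (hess z *ᵥ v) ≤ c * (v ⬝ᵥ (hess xstar *ᵥ v)) ∧
      v ⬝ᵥ (hess xstar *ᵥ v) ≤ c * (v ⬝ᵥ (hess z *ᵥ v)) :=
    fun z hz v => L.hess_compare hM hssc hmin (hD 0).1 hDω hz v
  have hKq : ∀ v, v ⬝ᵥ ((c • hess xstar) *ᵥ v) = c * (v ⬝ᵥ (hess xstar *ᵥ v)) := by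
    intro v
    rw [Matrix.smul_mulVec, dotProduct_smul, smul_eq_mul]
  have hdom : ∀ i, f (x i) - f xstar ≤ c ^ 2 * (grad (x i) ⬝ᵥ (N *ᵥ grad (x i))) := by
    intro i
    have h := L.gradient_dominated hK (e := x i - xstar) hmin (κ := c ^ 2) (by positivity) (by
      intro τ hτ v
      have hz : f (xstar + τ • (x i - xstar)) ≤ f (x 0) :=
        L.segment_le (hmin _) (by rw [add_sub_cancel]; exact hle0 i) hτ
      have := mul_le_mul_of_nonneg_left (hcmp _ hz v).2 hc0.le
      rw [hKq]
      linarith)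
    rwa [add_sub_cancel] at h
  set κ := α * (1 - β) / c ^ 2 with hκ
  have hαβ0 : 0 < α * (1 - β) := mul_pos hα0 (by linarith)
  have hαβ1 : α * (1 - β) < 1 := by nlinarith
  have hz0 : 0 ≤ κ / 3 := by positivity
  have hκ1 : κ < 1 := by
    rw [hκ, div_lt_one (by positivity)]
    nlinarith
  have hrate : α * (1 - β) / (3 * c ^ 2) = κ / 3 := by
    rw [hκ]; field_simp
  have hC0 : 0 < f (x 0) - f xstar := by linarith
  rw [hrate, div_le_iff₀ hC0, mul_comm]
  have hcontr : ∀ i, 0 < f (x i) - f xstar →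
      f (x (i+1)) - f xstar ≤ (f (x i) - f xstar) * (1 - 3 * (κ / 3) *
        Real.exp (Psi d (c⁻¹ • (S⁻¹ * B (i+1) * S⁻¹)) - Psi d (c⁻¹ • (S⁻¹ * B i * S⁻¹)))) := by
    intro i hi
    have hg : grad (x i) ≠ 0 := by
      intro h0
      have := hdom i
      rw [h0] at this
      simp at this
      linarith
    obtain ⟨h1, h2, h3, h4⟩ := hstep i (hBpd i) hg
    have hsy : 0 < (x (i+1) - x i) ⬝ᵥ (grad (x (i+1)) - grad (x i)) :=
      lt_of_lt_of_le (mul_pos (by linarith) h2) h4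
    have hco := L.cocoercive hK (a := x i) (s := x (i+1) - x i) (by
      intro τ hτ v
      have hz : f (x i + τ • (x (i+1) - x i)) ≤ f (x 0) :=
        L.segment_le (hle0 i) (by rw [add_sub_cancel]; exact hle0 (i+1)) hτ
      rw [hKq]
      exact (hcmp _ hz v).1)
    rw [add_sub_cancel] at hco
    have hexp := exp_psi_step (hBpd i) hNR hNpd (hη i) h1 rfl h2 hsy hco
    rw [← hBupd i] at hexp
    have hd := hdom i
    set E := Real.exp (Psi d (c⁻¹ • (S⁻¹ * B (i+1) * S⁻¹)) - Psi d (c⁻¹ • (S⁻¹ * B i * S⁻¹)))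
    have hE : 0 < E := Real.exp_pos _
    set p := -(grad (x i) ⬝ᵥ (x (i+1) - x i))
    set σ := (x (i+1) - x i) ⬝ᵥ (grad (x (i+1)) - grad (x i))
    set G := grad (x i) ⬝ᵥ (N *ᵥ grad (x i))
    -- Curvature `(1 - β) p ≤ σ` turns `G σ E ≤ p²` into `(1 - β) G E ≤ p`.
    have h5 : (1 - β) * (G * E) ≤ p := by
      have a1 : (1 - β) * (G * σ * E) ≤ (1 - β) * p ^ 2 :=
        mul_le_mul_of_nonneg_left hexp (by linarith)
      have a2 : (1 - β) * p * p ≤ σ * p := mul_le_mul_of_nonneg_right h4 h2.le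
      have a3 : σ * ((1 - β) * (G * E)) ≤ σ * p := by linarith
      exact le_of_mul_le_mul_left a3 hsy
    have h6 : κ * (f (x i) - f xstar) ≤ α * (1 - β) * G := by
      rw [hκ, div_mul_eq_mul_div, div_le_iff₀ (by positivity)]
      have := mul_le_mul_of_nonneg_left hd hαβ0.le
      linarith
    have h7 := mul_le_mul_of_nonneg_right h6 hE.le
    have h8 := mul_le_mul_of_nonneg_left h5 hα0.le
    linarith
  by_cases hpos : 0 < f (x t) - f xstar
  · refine contraction_product (C := fun i => f (x i) - f xstar)
      (P := fun i => Psi d (c⁻¹ • (S⁻¹ * B i * S⁻¹))) hz0 (by linarith) hC0.le t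
      (fun i _ => by linarith [hmin (x i)]) (fun i hi => ?_) ?_ ?_
    · refine hcontr i ?_
      have : f (x t) ≤ f (x i) := hanti hi.le
      linarith
    · apply psi_nonneg
      refine Matrix.PosDef.smul ?_ (inv_pos.2 hc0)
      have hinj : Function.Injective (S⁻¹).mulVec :=
        Matrix.mulVec_injective_iff_isUnit.2 hSpd.inv.isUnit
      have := (hBpd t).conjTranspose_mul_mul_same hinj
      rwa [hSpd.inv.1] at this
    · rw [← hBbar]; exact ht
  · refine (not_lt.1 hpos).trans (mul_nonneg hC0.le (pow_nonneg ?_ t))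
    linarith
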